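/- arXiv:2402.13121 — 4 statements merged into one kernel-verified Lean document; each statement's English description precedes it below -/
import Mathlib

section
/- Let k ≥ 1 be an integer, L > 0 real, and a, b ∈ ℝ. Define ψ_k : [0,L] → ℝ by ψ_k(t) = e^{kt}/(1+e^{2kL}) + e^{-kt}/(1+e^{-2kL}), and φ(θ,t) = ψ_k(t)(a sin(kθ) + b cos(kθ)). Then ψ_k(0) = 1, ψ_k′(L) = 0, and ∫_0^L ∫_0^{2π} ( (∂_t φ)² + (∂_θ φ)² ) dθ dt = π(a²+b²) ( k/(1+e^{-2kL}) − k/(1+e^{2kL}) ). -/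
open Real MeasureTheory intervalIntegral

/-!
Since `ψ_k(t) = cosh (k (t - L)) / cosh (k L)`, both factors of `φ = ψ_k β_k` are eigenfunctions:
`ψ_k'' = k² ψ_k` and `β_k'' = -k² β_k`. Integrating by parts around the circle replaces
`∫ (β_k')²` by `k² ∫ β_k²`, so the energy of `φ` is `∫ β_k² · ∫ ((ψ_k')² + k² ψ_k²)`, and
integrating by parts in `t` leaves only the boundary term `-ψ_k'(0) = k tanh (k L)`.
Likewise `β_k'` is `k` times the mode a quarter turn ahead of `β_k`, so integration by parts gives
these two modes the same `L²` norm; their squares add up to `a² + b²`, whence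
`∫ β_k² = π (a² + b²)`.
-/

/-- The Dirichlet energy of `φ(θ, t)` on the flat cylinder `S¹ × [0, L]`, where `S¹ = ℝ / 2πℤ` is
represented by the fundamental domain `[0, 2π]`. -/
noncomputable def cylinderEnergy (φ : ℝ → ℝ → ℝ) (L : ℝ) : ℝ :=
  ∫ t in (0 : ℝ)..L, ∫ θ in (0 : ℝ)..(2 * π),
    ((deriv (fun s => φ θ s) t) ^ 2 + (deriv (fun x => φ x t) θ) ^ 2)

/-- The boundary value `β_κ` of the harmonic extension: the general real oscillation of
frequency `κ`. -/
noncomputable def fourierMode (κ a b θ : ℝ) : ℝ :=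
  a * sin (κ * θ) + b * cos (κ * θ)

/-- The longitudinal factor `ψ_κ` of the harmonic extension: the solution of `ψ'' = κ² ψ` with
`ψ 0 = 1` and `ψ' L = 0`, in hyperbolic rather than exponential form. -/
noncomputable def neumannProfile (κ L t : ℝ) : ℝ :=
  cosh (κ * (t - L)) / cosh (κ * L)

section SeparationOfVariables

variable {c : ℝ} {f f' g g' : ℝ → ℝ}

lemma continuous_of_hasDerivAt (hf : ∀ t, HasDerivAt f (f' t) t) : Continuous f :=
  continuous_iff_continuousAt.mpr fun t => (hf t).continuousAt

lemma integral_deriv_sq_add_mul_sq (hf : ∀ t, HasDerivAt f (f' t) t)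
    (hf' : ∀ t, HasDerivAt f' (c * f t) t) (x y : ℝ) :
    ∫ t in x..y, (f' t ^ 2 + c * f t ^ 2) = f y * f' y - f x * f' x := by
  have f_cont : Continuous f := continuous_of_hasDerivAt hf
  have f'_cont : Continuous f' := continuous_of_hasDerivAt hf'
  rw [← integral_deriv_mul_eq_sub (fun t _ => hf t) (fun t _ => hf' t)
    (f'_cont.intervalIntegrable x y) ((f_cont.const_mul c).intervalIntegrable x y)]
  congr with t
  ring

lemma integral_deriv_sq_eq_mul_integral_sq (hg : ∀ θ, HasDerivAt g (g' θ) θ)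
    (hg' : ∀ θ, HasDerivAt g' (-c * g θ) θ) {x y : ℝ} (h_bdry : g y * g' y = g x * g' x) :
    ∫ θ in x..y, g' θ ^ 2 = c * ∫ θ in x..y, g θ ^ 2 := by
  have g_sq_int : IntervalIntegrable (fun θ => g θ ^ 2) volume x y :=
    ((continuous_of_hasDerivAt hg).pow 2).intervalIntegrable x y
  have g'_sq_int : IntervalIntegrable (fun θ => g' θ ^ 2) volume x y :=
    ((continuous_of_hasDerivAt hg').pow 2).intervalIntegrable x y
  have green := integral_deriv_sq_add_mul_sq hg hg' x y
  rw [integral_add g'_sq_int (g_sq_int.const_mul _),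
    intervalIntegral.integral_const_mul] at green
  linear_combination green + h_bdry

theorem cylinderEnergy_mul (hf : ∀ t, HasDerivAt f (f' t) t)
    (hf' : ∀ t, HasDerivAt f' (c * f t) t) (hg : ∀ θ, HasDerivAt g (g' θ) θ)
    (hg' : ∀ θ, HasDerivAt g' (-c * g θ) θ) (h_bdry : g (2 * π) * g' (2 * π) = g 0 * g' 0)
    (L : ℝ) :
    cylinderEnergy (fun θ t => f t * g θ) L =
      (f L * f' L - f 0 * f' 0) * ∫ θ in (0 : ℝ)..(2 * π), g θ ^ 2 := by
  have g_sq_int : IntervalIntegrable (fun θ => g θ ^ 2) volume 0 (2 * π) :=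
    ((continuous_of_hasDerivAt hg).pow 2).intervalIntegrable _ _
  have g'_sq_int : IntervalIntegrable (fun θ => g' θ ^ 2) volume 0 (2 * π) :=
    ((continuous_of_hasDerivAt hg').pow 2).intervalIntegrable _ _
  have circle_integral (t : ℝ) :
      ∫ θ in (0 : ℝ)..(2 * π), ((f' t * g θ) ^ 2 + (f t * g' θ) ^ 2) =
        (f' t ^ 2 + c * f t ^ 2) * ∫ θ in (0 : ℝ)..(2 * π), g θ ^ 2 := by
    simp only [mul_pow]
    rw [integral_add (g_sq_int.const_mul _) (g'_sq_int.const_mul _),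
      intervalIntegral.integral_const_mul, intervalIntegral.integral_const_mul,
      integral_deriv_sq_eq_mul_integral_sq hg hg' h_bdry]
    ring
  simp only [cylinderEnergy, ((hf _).mul_const _).deriv, ((hg _).const_mul _).deriv,
    circle_integral]
  rw [intervalIntegral.integral_mul_const, integral_deriv_sq_add_mul_sq hf hf']

end SeparationOfVariables

section FourierMode

variable (κ a b : ℝ)

lemma hasDerivAt_fourierMode (θ : ℝ) :
    HasDerivAt (fourierMode κ a b) (κ * fourierMode κ (-b) a θ) θ := by
  have phase : HasDerivAt (fun x => κ * x) κ θ := hasDerivAt_const_mul κ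
  refine ((phase.sin.const_mul a).add (phase.cos.const_mul b)).congr_deriv ?_
  simp only [fourierMode]
  ring

lemma hasDerivAt_mul_fourierMode (θ : ℝ) :
    HasDerivAt (fun x => κ * fourierMode κ (-b) a x) (-κ ^ 2 * fourierMode κ a b θ) θ := by
  refine ((hasDerivAt_fourierMode κ (-b) a θ).const_mul κ).congr_deriv ?_
  simp only [fourierMode]
  ring

lemma fourierMode_sq_add_fourierMode_sq (θ : ℝ) :
    fourierMode κ a b θ ^ 2 + fourierMode κ (-b) a θ ^ 2 = a ^ 2 + b ^ 2 := by
  simp only [fourierMode]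
  linear_combination (a ^ 2 + b ^ 2) * sin_sq_add_cos_sq (κ * θ)

lemma fourierMode_two_pi (k : ℤ) : fourierMode k a b (2 * π) = fourierMode k a b 0 := by
  simp [fourierMode, sin_periodic.int_mul_eq k]

theorem integral_fourierMode_sq {k : ℤ} (hk : k ≠ 0) :
    ∫ θ in (0 : ℝ)..(2 * π), fourierMode k a b θ ^ 2 = π * (a ^ 2 + b ^ 2) := by
  have mode_sq_int (a b : ℝ) :
      IntervalIntegrable (fun θ => fourierMode k a b θ ^ 2) volume 0 (2 * π) :=
    ((continuous_of_hasDerivAt (hasDerivAt_fourierMode k a b)).pow 2).intervalIntegrable _ _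
  have conjugate_eq : ∫ θ in (0 : ℝ)..(2 * π), fourierMode k (-b) a θ ^ 2 =
      ∫ θ in (0 : ℝ)..(2 * π), fourierMode k a b θ ^ 2 := by
    have by_parts := integral_deriv_sq_eq_mul_integral_sq (hasDerivAt_fourierMode k a b)
      (hasDerivAt_mul_fourierMode k a b) (x := 0) (y := 2 * π) (by simp only [fourierMode_two_pi])
    simp only [mul_pow, intervalIntegral.integral_const_mul] at by_parts
    exact mul_left_cancel₀ (pow_ne_zero 2 (Int.cast_ne_zero.mpr hk)) by_parts
  have sum_eq : (∫ θ in (0 : ℝ)..(2 * π), fourierMode k a b θ ^ 2) +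
      ∫ θ in (0 : ℝ)..(2 * π), fourierMode k (-b) a θ ^ 2 = 2 * π * (a ^ 2 + b ^ 2) := by
    rw [← integral_add (mode_sq_int a b) (mode_sq_int (-b) a)]
    simp only [fourierMode_sq_add_fourierMode_sq, intervalIntegral.integral_const, smul_eq_mul,
      sub_zero]
  linarith

end FourierMode

section NeumannProfile

lemma one_add_exp_two_mul (x : ℝ) : 1 + exp (2 * x) = 2 * exp x * cosh x := by
  rw [cosh_eq, two_mul x, exp_add, exp_neg]
  field_simp
  ring

lemma exp_div_one_add_exp_two_mul (s x : ℝ) :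
    exp s / (1 + exp (2 * x)) = exp (s - x) / (2 * cosh x) := by
  rw [one_add_exp_two_mul, exp_sub]
  field_simp

lemma exp_div_add_exp_neg_div_eq_cosh_div_cosh (s x : ℝ) :
    exp s / (1 + exp (2 * x)) + exp (-s) / (1 + exp (-(2 * x))) = cosh (s - x) / cosh x := by
  rw [← mul_neg, exp_div_one_add_exp_two_mul, exp_div_one_add_exp_two_mul, cosh_neg,
    cosh_eq (s - x), neg_sub_neg, neg_sub]
  ring

lemma inv_one_add_exp_neg_sub_inv_one_add_exp (x : ℝ) :
    (1 + exp (-(2 * x)))⁻¹ - (1 + exp (2 * x))⁻¹ = tanh x := by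
  have inv_eq (y : ℝ) : (1 + exp (2 * y))⁻¹ = exp (-y) / (2 * cosh y) := by
    simpa using exp_div_one_add_exp_two_mul 0 y
  rw [← mul_neg, inv_eq, inv_eq, cosh_neg, neg_neg, tanh_eq_sinh_div_cosh, sinh_eq]
  ring

variable (κ L : ℝ)

lemma neumannProfile_zero : neumannProfile κ L 0 = 1 := by
  simp [neumannProfile, (cosh_pos _).ne']

lemma hasDerivAt_neumannProfile (t : ℝ) :
    HasDerivAt (neumannProfile κ L) (κ * sinh (κ * (t - L)) / cosh (κ * L)) t := by
  have phase : HasDerivAt (fun s => κ * (s - L)) κ t := by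
    simpa using ((hasDerivAt_id t).sub_const L).const_mul κ
  exact (phase.cosh.div_const _).congr_deriv (by ring)

lemma hasDerivAt_mul_sinh_div_cosh (t : ℝ) :
    HasDerivAt (fun s => κ * sinh (κ * (s - L)) / cosh (κ * L))
      (κ ^ 2 * neumannProfile κ L t) t := by
  have phase : HasDerivAt (fun s => κ * (s - L)) κ t := by
    simpa using ((hasDerivAt_id t).sub_const L).const_mul κ
  refine ((phase.sinh.const_mul κ).div_const _).congr_deriv ?_
  rw [neumannProfile]
  ring

lemma deriv_neumannProfile_self : deriv (neumannProfile κ L) L = 0 := by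
  simp [(hasDerivAt_neumannProfile κ L L).deriv]

end NeumannProfile

theorem cylinderEnergy_neumannProfile_mul_fourierMode {k : ℤ} (hk : k ≠ 0) (L a b : ℝ) :
    cylinderEnergy (fun θ t => neumannProfile k L t * fourierMode k a b θ) L =
      π * (a ^ 2 + b ^ 2) * (k * tanh (k * L)) := by
  rw [cylinderEnergy_mul (hasDerivAt_neumannProfile k L) (hasDerivAt_mul_sinh_div_cosh k L)
    (hasDerivAt_fourierMode k a b) (hasDerivAt_mul_fourierMode k a b)
    (by simp only [fourierMode_two_pi]), integral_fourierMode_sq a b hk, neumannProfile_zero,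
    tanh_eq_sinh_div_cosh]
  simp only [sub_self, zero_sub, mul_zero, mul_neg, sinh_zero, sinh_neg]
  ring

/-- For `k ≥ 1`, `L > 0`, `a b : ℝ`, the function
`ψ_k(t) = e^{kt}/(1+e^{2kL}) + e^{-kt}/(1+e^{-2kL})` satisfies `ψ_k(0) = 1`, `ψ_k′(L) = 0`,
and the Dirichlet energy of `φ(θ,t) = ψ_k(t)(a sin kθ + b cos kθ)` on the flat cylinder
`S¹×[0,L]` equals `π(a²+b²)(k/(1+e^{-2kL}) − k/(1+e^{2kL}))`. -/
theorem stmt_2 (k : ℕ) (hk : 1 ≤ k) (L : ℝ) (hL : 0 < L) (a b : ℝ)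
    (ψ : ℝ → ℝ)
    (hψ : ∀ t, ψ t = Real.exp (k * t) / (1 + Real.exp (2 * k * L))
        + Real.exp (-(k * t)) / (1 + Real.exp (-(2 * k * L))))
    (φ : ℝ → ℝ → ℝ)
    (hφ : ∀ θ t, φ θ t = ψ t * (a * Real.sin (k * θ) + b * Real.cos (k * θ))) :
    ψ 0 = 1 ∧ deriv ψ L = 0 ∧
    (∫ t in (0:ℝ)..L, ∫ θ in (0:ℝ)..(2 * π),
        ((deriv (fun s => φ θ s) t) ^ 2 + (deriv (fun x => φ x t) θ) ^ 2))
      = π * (a ^ 2 + b ^ 2) *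
        ((k : ℝ) / (1 + Real.exp (-(2 * k * L))) - (k : ℝ) / (1 + Real.exp (2 * k * L))) := by
  obtain rfl : ψ = neumannProfile k L := by
    funext t
    rw [hψ, mul_assoc, exp_div_add_exp_neg_div_eq_cosh_div_cosh, neumannProfile, mul_sub]
  obtain rfl : φ = fun θ t => neumannProfile k L t * fourierMode k a b θ :=
    funext₂ hφ
  refine ⟨neumannProfile_zero k L, deriv_neumannProfile_self k L, ?_⟩
  have energy_eq := cylinderEnergy_neumannProfile_mul_fourierMode
    (Int.natCast_ne_zero.mpr (Nat.one_le_iff_ne_zero.mp hk)) L a b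
  rw [Int.cast_natCast] at energy_eq
  rw [div_eq_mul_inv, div_eq_mul_inv, ← mul_sub, mul_assoc 2,
    inv_one_add_exp_neg_sub_inv_one_add_exp]
  exact energy_eq
end

section
/- Let L > 0 and let φ : S¹×[0,L] → ℝ be continuously differentiable, where S¹ = ℝ/2πℤ. Then tanh(L) · ( ∫_0^{2π} φ(θ,L)² dθ − (1/(2π)) ( ∫_0^{2π} φ(θ,L) dθ )² ) ≤ ∫_0^L ∫_0^{2π} ( (∂_θφ)² + (∂_tφ)² ) dθ dt. -/
open Real MeasureTheory intervalIntegral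

/-!
For `u t = φ(·, t) - ⨍ φ(·, t)` and `V t = ∫ (u t)²`, consider `F t = k * tanh (k * t) * V t` with
`k = 2π / (b - a)`, so that `F 0 = 0`. Since `tanh' = 1 - tanh²` and `V' = 2 ∫ u ∂ₜφ`, Young's
inequality `2 k τ u ∂ₜφ ≤ (k τ)² u² + (∂ₜφ)²` at `τ = tanh (k * t)` gives `F' ≤ k² V + ∫ (∂ₜφ)²`,
and Wirtinger's inequality `k² V ≤ ∫ (∂_θφ)²` bounds this by the energy of the slice at height `t`.
Integrating over `[0, L]` gives the estimate.
-/

lemma memLp_restrict_of_continuousOn_of_subset_isCompact {X E : Type*} [TopologicalSpace X]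
    [MeasurableSpace X] [OpensMeasurableSpace X] [NormedAddCommGroup E] {μ : Measure X}
    [IsFiniteMeasureOnCompacts μ] {f : X → E} {s t : Set X} (hf : ContinuousOn f s)
    (hs : IsCompact s) (ht : MeasurableSet t) (hts : t ⊆ s) (p : ENNReal) :
    MemLp f p (μ.restrict t) := by
  obtain ⟨C, hC⟩ := hs.exists_bound_of_continuousOn hf
  have : IsFiniteMeasure (μ.restrict t) :=
    isFiniteMeasure_restrict.2 (measure_ne_top_of_subset hts hs.measure_ne_top)
  exact MemLp.of_bound (hf.aestronglyMeasurable_of_subset_isCompact hs ht hts) C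
    ((ae_restrict_mem ht).mono fun x hx => hC x (hts hx))

lemma memLp_restrict_Ioc_of_continuousOn {E : Type*} [NormedAddCommGroup E] {μ : Measure ℝ}
    [IsFiniteMeasureOnCompacts μ] {f : ℝ → E} {a b : ℝ} (hf : ContinuousOn f (Set.Icc a b))
    (p : ENNReal) : MemLp f p (μ.restrict (Set.Ioc a b)) :=
  memLp_restrict_of_continuousOn_of_subset_isCompact hf isCompact_Icc measurableSet_Ioc
    Set.Ioc_subset_Icc_self p

lemma integral_sub_average_sq {a b : ℝ} {f : ℝ → ℝ} (hf : IntervalIntegrable f volume a b)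
    (hf2 : IntervalIntegrable (fun x => f x ^ 2) volume a b) :
    ∫ x in a..b, (f x - ⨍ y in a..b, f y) ^ 2
      = (∫ x in a..b, f x ^ 2) - 1 / (b - a) * (∫ x in a..b, f x) ^ 2 := by
  rcases eq_or_ne a b with rfl | hab
  · simp
  have hba : b - a ≠ 0 := sub_ne_zero.2 hab.symm
  simp only [sub_sq, interval_average_eq_div]
  rw [integral_add (hf2.sub ((hf.const_mul 2).mul_const _)) intervalIntegrable_const,
    integral_sub hf2 ((hf.const_mul 2).mul_const _), intervalIntegral.integral_mul_const,
    intervalIntegral.integral_const_mul, intervalIntegral.integral_const, smul_eq_mul]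
  field_simp
  ring

section Wirtinger

variable {a b : ℝ}

lemma norm_fourierCoeffOn_le_mul_of_hasDeriv_right {f f' : ℝ → ℂ} (hab : a < b)
    (hf : ContinuousOn f (Set.Icc a b))
    (hff' : ∀ x ∈ Set.Ioo a b, HasDerivWithinAt f (f' x) (Set.Ioi x) x)
    (hf' : IntervalIntegrable f' volume a b) (hfab : f a = f b) {n : ℤ} (hn : n ≠ 0) :
    ‖fourierCoeffOn hab f n‖ ≤ (b - a) / (2 * π) * ‖fourierCoeffOn hab f' n‖ := by
  have hba : 0 < b - a := sub_pos.2 hab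
  have hn1 : (1 : ℝ) ≤ |(n : ℝ)| := by exact_mod_cast Int.one_le_abs hn
  have hcoeff : ‖fourierCoeffOn hab f n‖
      = (b - a) / (2 * π * |(n : ℝ)|) * ‖fourierCoeffOn hab f' n‖ := by
    rw [fourierCoeffOn_of_hasDeriv_right hab hn (by rwa [Set.uIcc_of_le hab.le])
      (by rwa [min_eq_left hab.le, max_eq_right hab.le]) hf', hfab, ← Complex.ofReal_sub]
    simp only [sub_self, mul_zero, zero_sub, norm_mul, norm_neg, norm_div, norm_one,
      Complex.norm_I, Complex.norm_real, Complex.norm_intCast, RCLike.norm_ofNat,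
      Real.norm_eq_abs, abs_of_pos pi_pos, abs_of_pos hba, mul_one]
    ring
  rw [hcoeff]
  have hdenom : 2 * π ≤ 2 * π * |(n : ℝ)| := le_mul_of_one_le_right two_pi_pos.le hn1
  gcongr

theorem wirtinger_integral_norm_sq_le {f f' : ℝ → ℂ} (hab : a < b)
    (hf : ContinuousOn f (Set.Icc a b))
    (hff' : ∀ x ∈ Set.Ioo a b, HasDerivWithinAt f (f' x) (Set.Ioi x) x)
    (hf' : MemLp f' 2 (volume.restrict (Set.Ioc a b))) (hfab : f a = f b)
    (hmean : ∫ x in a..b, f x = 0) :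
    ∫ x in a..b, ‖f x‖ ^ 2 ≤ ((b - a) / (2 * π)) ^ 2 * ∫ x in a..b, ‖f' x‖ ^ 2 := by
  have hba : 0 < b - a := sub_pos.2 hab
  have hf'int : IntervalIntegrable f' volume a b :=
    (intervalIntegrable_iff_integrableOn_Ioc_of_le hab.le).2 (hf'.integrable one_le_two)
  have hcoeff (n : ℤ) : ‖fourierCoeffOn hab f n‖ ^ 2
      ≤ ((b - a) / (2 * π)) ^ 2 * ‖fourierCoeffOn hab f' n‖ ^ 2 := by
    rw [← mul_pow]
    rcases eq_or_ne n 0 with rfl | hn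
    · have hzero : fourierCoeffOn hab f 0 = 0 := by
        simp [fourierCoeffOn_eq_integral, hmean]
      rw [hzero, norm_zero, zero_pow two_ne_zero]
      positivity
    · gcongr
      exact norm_fourierCoeffOn_le_mul_of_hasDeriv_right hab hf hff' hf'int hfab hn
  have hparseval := hasSum_le hcoeff
    (hasSum_sq_fourierCoeffOn hab (memLp_restrict_Ioc_of_continuousOn hf 2))
    ((hasSum_sq_fourierCoeffOn hab hf').mul_left _)
  rw [smul_eq_mul, smul_eq_mul, mul_left_comm] at hparseval
  exact le_of_mul_le_mul_left hparseval (inv_pos.2 hba)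

theorem wirtinger_integral_sub_average_sq_le {f f' : ℝ → ℝ} (hab : a < b)
    (hf : ContinuousOn f (Set.Icc a b))
    (hff' : ∀ x ∈ Set.Ioo a b, HasDerivWithinAt f (f' x) (Set.Ioi x) x)
    (hf' : MemLp f' 2 (volume.restrict (Set.Ioc a b))) (hfab : f a = f b) :
    ∫ x in a..b, (f x - ⨍ y in a..b, f y) ^ 2
      ≤ ((b - a) / (2 * π)) ^ 2 * ∫ x in a..b, f' x ^ 2 := by
  have hmean : ∫ x in a..b, ((f x - ⨍ y in a..b, f y : ℝ) : ℂ) = 0 := by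
    rw [intervalIntegral.integral_ofReal, integral_of_le hab.le, Set.uIoc_of_le hab.le,
      integral_sub_average, Complex.ofReal_zero]
  simpa only [Complex.norm_real, Real.norm_eq_abs, sq_abs] using
    wirtinger_integral_norm_sq_le (f := fun x => ((f x - ⨍ y in a..b, f y : ℝ) : ℂ))
      (f' := fun x => (f' x : ℂ)) hab
      (Complex.continuous_ofReal.comp_continuousOn (hf.sub continuousOn_const))
      (fun x hx => ((hff' x hx).sub_const _).ofReal_comp) hf'.ofReal (by rw [hfab]) hmean

end Wirtinger

theorem hasDerivAt_intervalIntegral_of_continuous_deriv {𝕜 E : Type*} [RCLike 𝕜]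
    [NormedAddCommGroup E] [NormedSpace ℝ E] [NormedSpace 𝕜 E]
    {μ : Measure ℝ} [IsLocallyFiniteMeasure μ] {F F' : 𝕜 → ℝ → E}
    (hF : Continuous (Function.uncurry F)) (hF' : Continuous (Function.uncurry F'))
    (hFF' : ∀ s x, HasDerivAt (F · x) (F' s x) s) (a b : ℝ) (t : 𝕜) :
    HasDerivAt (fun s => ∫ x in a..b, F s x ∂μ) (∫ x in a..b, F' t x ∂μ) t := by
  obtain ⟨C, hC⟩ := ((isCompact_closedBall t 1).prod
    (isCompact_uIcc (a := a) (b := b))).exists_bound_of_continuousOn hF'.continuousOn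
  exact (hasDerivAt_integral_of_dominated_loc_of_deriv_le (bound := fun _ => C)
    (Metric.closedBall_mem_nhds t one_pos)
    (.of_forall fun s => (hF.uncurry_left s).aestronglyMeasurable)
    ((hF.uncurry_left t).intervalIntegrable _ _)
    (hF'.uncurry_left t).aestronglyMeasurable
    (.of_forall fun x hx s hs => hC (s, x) ⟨hs, Set.uIoc_subset_uIcc hx⟩)
    intervalIntegrable_const
    (.of_forall fun x _ s _ => hFF' s x)).2

theorem hasDerivAt_integral_sub_average_sq {F F' : ℝ → ℝ → ℝ}
    (hF : Continuous (Function.uncurry F)) (hF' : Continuous (Function.uncurry F'))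
    (hFF' : ∀ s x, HasDerivAt (F · x) (F' s x) s) (a b t : ℝ) :
    HasDerivAt (fun s => ∫ x in a..b, (F s x - ⨍ y in a..b, F s y) ^ 2)
      (2 * ∫ x in a..b, (F t x - ⨍ y in a..b, F t y) * F' t x) t := by
  have hFc (s : ℝ) : Continuous (F s) := hF.uncurry_left s
  have hF'c : Continuous (F' t) := hF'.uncurry_left t
  have hexpand (s : ℝ) : ∫ x in a..b, (F s x - ⨍ y in a..b, F s y) ^ 2
      = (∫ x in a..b, F s x ^ 2) - 1 / (b - a) * (∫ x in a..b, F s x) ^ 2 :=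
    integral_sub_average_sq ((hFc s).intervalIntegrable _ _)
      (((hFc s).pow 2).intervalIntegrable _ _)
  have hint : HasDerivAt (fun s => ∫ x in a..b, F s x) (∫ x in a..b, F' t x) t :=
    hasDerivAt_intervalIntegral_of_continuous_deriv hF hF' hFF' a b t
  have hint_sq : HasDerivAt (fun s => ∫ x in a..b, F s x ^ 2)
      (∫ x in a..b, 2 * F t x * F' t x) t :=
    hasDerivAt_intervalIntegral_of_continuous_deriv (hF.pow 2)
      ((continuous_const.mul hF).mul hF') (fun s x => by simpa using (hFF' s x).fun_pow 2) a b t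
  simp only [hexpand]
  refine (hint_sq.sub ((hint.fun_pow 2).const_mul (1 / (b - a)))).congr_deriv ?_
  simp only [sub_mul, mul_assoc, interval_average_eq_div]
  have hFF'c : Continuous fun x => F t x * F' t x := (hFc t).mul hF'c
  rw [integral_sub (hFF'c.intervalIntegrable _ _) ((hF'c.const_mul _).intervalIntegrable _ _),
    intervalIntegral.integral_const_mul, intervalIntegral.integral_const_mul]
  simp only [Nat.cast_ofNat, Nat.add_one_sub_one, pow_one]
  ring

lemma continuous_deriv_of_contDiff_uncurry {𝕜 E G : Type*} [NontriviallyNormedField 𝕜]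
    [NormedAddCommGroup E] [NormedSpace 𝕜 E] [NormedAddCommGroup G] [NormedSpace 𝕜 G]
    {f : E → 𝕜 → G} {g : E → 𝕜} (hf : ContDiff 𝕜 1 (Function.uncurry f)) (hg : Continuous g) :
    Continuous fun x => deriv (f x) (g x) := by
  simp only [← fderiv_apply_one_eq_deriv]
  exact (Continuous.fderiv_one hf hg).clm_apply continuous_const

theorem two_mul_integral_mul_le {α : Type*} [MeasurableSpace α] {μ : Measure α} {u g : α → ℝ}
    (hu : MemLp u 2 μ) (hg : MemLp g 2 μ) (c : ℝ) :
    2 * c * ∫ x, u x * g x ∂μ ≤ c ^ 2 * (∫ x, u x ^ 2 ∂μ) + ∫ x, g x ^ 2 ∂μ := by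
  have hug : Integrable (fun x => u x * g x) μ := hu.integrable_mul hg
  rw [← MeasureTheory.integral_const_mul, ← MeasureTheory.integral_const_mul,
    ← MeasureTheory.integral_add (hu.integrable_sq.const_mul _) hg.integrable_sq]
  refine integral_mono (hug.const_mul _) ((hu.integrable_sq.const_mul _).add hg.integrable_sq)
    fun x => ?_
  linarith [two_mul_le_add_sq (c * u x) (g x)]

lemma hasDerivAt_tanh (x : ℝ) : HasDerivAt tanh (1 - tanh x ^ 2) x := by
  have hquot := (hasDerivAt_sinh x).fun_div (hasDerivAt_cosh x) (cosh_pos x).ne'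
  simp only [← tanh_eq_sinh_div_cosh] at hquot
  refine hquot.congr_deriv ?_
  rw [tanh_eq_sinh_div_cosh]
  field_simp [(cosh_pos x).ne']

lemma integral_sub_average_sq_add_integral_mul_le {a b : ℝ} {f f' g : ℝ → ℝ} (hab : a < b)
    (hf : ContinuousOn f (Set.Icc a b))
    (hff' : ∀ x ∈ Set.Ioo a b, HasDerivWithinAt f (f' x) (Set.Ioi x) x)
    (hf' : MemLp f' 2 (volume.restrict (Set.Ioc a b))) (hfab : f a = f b)
    (hg : MemLp g 2 (volume.restrict (Set.Ioc a b))) (τ : ℝ) :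
    (2 * π / (b - a)) ^ 2 * (1 - τ ^ 2) * (∫ x in a..b, (f x - ⨍ y in a..b, f y) ^ 2) +
        2 * (2 * π / (b - a) * τ) * ∫ x in a..b, (f x - ⨍ y in a..b, f y) * g x
      ≤ ∫ x in a..b, (f' x ^ 2 + g x ^ 2) := by
  set k := 2 * π / (b - a) with hk
  set u : ℝ → ℝ := fun x => f x - ⨍ y in a..b, f y
  have hk0 : 0 < k := div_pos two_pi_pos (sub_pos.2 hab)
  have hu : MemLp u 2 (volume.restrict (Set.Ioc a b)) :=
    memLp_restrict_Ioc_of_continuousOn (hf.sub continuousOn_const) 2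
  have hwirtinger : k ^ 2 * ∫ x in a..b, u x ^ 2 ≤ ∫ x in a..b, f' x ^ 2 := by
    rw [← le_inv_mul_iff₀ (pow_pos hk0 2), ← inv_pow, hk, inv_div]
    exact wirtinger_integral_sub_average_sq_le hab hf hff' hf' hfab
  have hyoung : 2 * (k * τ) * ∫ x in a..b, u x * g x
      ≤ (k * τ) ^ 2 * (∫ x in a..b, u x ^ 2) + ∫ x in a..b, g x ^ 2 := by
    simpa only [integral_of_le hab.le] using two_mul_integral_mul_le hu hg (k * τ)
  have hsplit : ∫ x in a..b, (f' x ^ 2 + g x ^ 2)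
      = (∫ x in a..b, f' x ^ 2) + ∫ x in a..b, g x ^ 2 :=
    integral_add ((intervalIntegrable_iff_integrableOn_Ioc_of_le hab.le).2 hf'.integrable_sq)
      ((intervalIntegrable_iff_integrableOn_Ioc_of_le hab.le).2 hg.integrable_sq)
  linarith

theorem tanh_mul_integral_sub_average_sq_le {a b L : ℝ} (hab : a < b) (hL : 0 ≤ L)
    {F X T : ℝ → ℝ → ℝ} (hF : Continuous (Function.uncurry F))
    (hX : Continuous (Function.uncurry X)) (hT : Continuous (Function.uncurry T))
    (hFX : ∀ t x, HasDerivAt (F t) (X t x) x) (hFT : ∀ t x, HasDerivAt (F · x) (T t x) t)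
    (hper : ∀ t ∈ Set.Ioo 0 L, F t a = F t b) :
    2 * π / (b - a) * tanh (2 * π / (b - a) * L) * ∫ x in a..b, (F L x - ⨍ y in a..b, F L y) ^ 2
      ≤ ∫ t in 0..L, ∫ x in a..b, (X t x ^ 2 + T t x ^ 2) := by
  set k := 2 * π / (b - a) with hk
  have hweight (t : ℝ) : HasDerivAt (fun s => k * tanh (k * s))
      (k ^ 2 * (1 - tanh (k * t) ^ 2)) t :=
    (((hasDerivAt_tanh (k * t)).comp t (hasDerivAt_const_mul k)).const_mul k).congr_deriv (by ring)
  have hderiv (t : ℝ) := (hweight t).fun_mul (hasDerivAt_integral_sub_average_sq hF hT hFT a b t)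
  have henergy : Continuous fun t => ∫ x in a..b, (X t x ^ 2 + T t x ^ 2) :=
    continuous_parametric_intervalIntegral_of_continuous' ((hX.pow 2).add (hT.pow 2)) a b
  have hgrowth := sub_le_integral_of_hasDeriv_right_of_le hL
    (fun t _ => (hderiv t).continuousAt.continuousWithinAt)
    (fun t _ => (hderiv t).hasDerivWithinAt) henergy.continuousOn.integrableOn_Icc fun t ht => ?_
  · simpa only [mul_zero, tanh_zero, zero_mul, sub_zero] using hgrowth
  · have hslice := integral_sub_average_sq_add_integral_mul_le hab (hF.uncurry_left t).continuousOn
      (fun x _ => (hFX t x).hasDerivWithinAt)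
      (memLp_restrict_Ioc_of_continuousOn (hX.uncurry_left t).continuousOn 2) (hper t ht)
      (memLp_restrict_Ioc_of_continuousOn (hT.uncurry_left t).continuousOn 2) (tanh (k * t))
    rw [← hk] at hslice
    linarith

theorem stmt_4_general {a b L : ℝ} (hab : a < b) (hL : 0 ≤ L) {φ : ℝ → ℝ → ℝ}
    (hC1 : ContDiff ℝ 1 (fun p : ℝ × ℝ => φ p.1 p.2))
    (hper : ∀ t ∈ Set.Ioo 0 L, φ a t = φ b t) :
    2 * π / (b - a) * tanh (2 * π / (b - a) * L) * ((∫ θ in a..b, φ θ L ^ 2)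
        - 1 / (b - a) * (∫ θ in a..b, φ θ L) ^ 2)
      ≤ ∫ t in (0:ℝ)..L, ∫ θ in a..b,
          (deriv (fun x => φ x t) θ ^ 2 + deriv (fun s => φ θ s) t ^ 2) := by
  have hφ : Continuous (Function.uncurry fun t θ => φ θ t) := hC1.continuous.comp continuous_swap
  have hφL : Continuous fun θ => φ θ L := hφ.uncurry_left L
  rw [← integral_sub_average_sq (hφL.intervalIntegrable a b) ((hφL.pow 2).intervalIntegrable a b)]
  refine tanh_mul_integral_sub_average_sq_le hab hL hφ ?_ ?_ (fun t θ => ?_) (fun t θ => ?_) hper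
  · exact continuous_deriv_of_contDiff_uncurry (f := fun (p : ℝ × ℝ) x => φ x p.1)
      (hC1.comp (contDiff_snd.prodMk (contDiff_fst.comp contDiff_fst))) continuous_snd
  · exact continuous_deriv_of_contDiff_uncurry (f := fun (p : ℝ × ℝ) s => φ p.2 s)
      (hC1.comp ((contDiff_snd.comp contDiff_fst).prodMk contDiff_snd)) continuous_fst
  · exact ((hC1.comp (contDiff_id.prodMk contDiff_const)).differentiable one_ne_zero θ).hasDerivAt
  · exact ((hC1.comp (contDiff_const.prodMk contDiff_id)).differentiable one_ne_zero t).hasDerivAt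

/-- Poincaré-type boundary estimate on the flat cylinder `S¹×[0,L]`: for any `C¹` function
`φ` on the cylinder (formalized as a `C¹` function on `ℝ²` that is `2π`-periodic in `θ`),
`tanh(L)·(∫_0^{2π} φ(θ,L)² dθ − (1/2π)(∫_0^{2π} φ(θ,L) dθ)²)` is at most the Dirichlet
energy `∫_0^L ∫_0^{2π} ((∂_θφ)² + (∂_tφ)²) dθ dt`. -/
theorem stmt_4 (L : ℝ) (hL : 0 < L) (φ : ℝ → ℝ → ℝ)
    (hC1 : ContDiff ℝ 1 (fun p : ℝ × ℝ => φ p.1 p.2))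
    (hper : ∀ θ t : ℝ, φ (θ + 2 * π) t = φ θ t) :
    Real.tanh L * ((∫ θ in (0:ℝ)..(2 * π), (φ θ L) ^ 2)
        - (1 / (2 * π)) * (∫ θ in (0:ℝ)..(2 * π), φ θ L) ^ 2)
      ≤ ∫ t in (0:ℝ)..L, ∫ θ in (0:ℝ)..(2 * π),
          ((deriv (fun x => φ x t) θ) ^ 2 + (deriv (fun s => φ θ s) t) ^ 2) := by
  simpa [pi_ne_zero] using
    stmt_4_general two_pi_pos hL.le hC1 fun t _ => by simpa using (hper 0 t).symm
end

section
/- Let H be a real inner product space, let (e_i)_{i∈I} be a finite orthonormal family in H, let (c_i)_{i∈I} be real numbers, and let u ∈ H satisfy |u| ≤ 1. Set v = Σ_{i∈I} c_i (e_i − ⟨u,e_i⟩ u). Then |v|² ≥ ( Σ_{i∈I} c_i² ) · ( 1 − 2 Σ_{i∈I} ⟨u,e_i⟩² ). -/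
open scoped InnerProductSpace

/-!
With `w = ∑ cᵢ eᵢ`, linearity gives `v = w - ⟪u, w⟫ u`, hence
`‖v‖² = ‖w‖² - (2 - ‖u‖²) |⟪u, w⟫|² ≥ ‖w‖² - 2 |⟪u, w⟫|²`. Orthonormality gives
`‖w‖² = ∑ |cᵢ|²`, and the Cauchy–Schwarz inequality applied to `⟪u, w⟫ = ∑ cᵢ ⟪u, eᵢ⟫` bounds
`|⟪u, w⟫|²` by `(∑ |cᵢ|²) (∑ |⟪u, eᵢ⟫|²)`.
-/

section

variable {𝕜 H I : Type*} [RCLike 𝕜] [SeminormedAddCommGroup H] [InnerProductSpace 𝕜 H]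

theorem norm_sub_inner_smul_sq (u w : H) :
    ‖w - ⟪u, w⟫_𝕜 • u‖ ^ 2 = ‖w‖ ^ 2 - (2 - ‖u‖ ^ 2) * ‖⟪u, w⟫_𝕜‖ ^ 2 := by
  have cross_term : RCLike.re ⟪w, ⟪u, w⟫_𝕜 • u⟫_𝕜 = ‖⟪u, w⟫_𝕜‖ ^ 2 := by
    rw [inner_smul_right, inner_mul_symm_re_eq_norm, norm_mul, norm_inner_symm w u, sq]
  rw [norm_sub_sq (𝕜 := 𝕜), cross_term, norm_smul]
  ring

theorem norm_sq_sub_two_mul_norm_inner_sq_le (u w : H) :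
    ‖w‖ ^ 2 - 2 * ‖⟪u, w⟫_𝕜‖ ^ 2 ≤ ‖w - ⟪u, w⟫_𝕜 • u‖ ^ 2 := by
  rw [norm_sub_inner_smul_sq]
  gcongr
  exact sub_le_self 2 (sq_nonneg ‖u‖)

theorem sum_smul_sub_inner_smul (s : Finset I) (c : I → 𝕜) (e : I → H) (u : H) :
    ∑ i ∈ s, c i • (e i - ⟪u, e i⟫_𝕜 • u)
      = ∑ i ∈ s, c i • e i - ⟪u, ∑ i ∈ s, c i • e i⟫_𝕜 • u := by
  simp only [smul_sub, smul_smul, Finset.sum_sub_distrib, inner_sum, inner_smul_right,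
    Finset.sum_smul]

theorem norm_inner_sum_smul_sq_le (s : Finset I) (c : I → 𝕜) (e : I → H) (u : H) :
    ‖⟪u, ∑ i ∈ s, c i • e i⟫_𝕜‖ ^ 2
      ≤ (∑ i ∈ s, ‖c i‖ ^ 2) * ∑ i ∈ s, ‖⟪u, e i⟫_𝕜‖ ^ 2 := by
  calc ‖⟪u, ∑ i ∈ s, c i • e i⟫_𝕜‖ ^ 2
      = ‖∑ i ∈ s, c i * ⟪u, e i⟫_𝕜‖ ^ 2 := by simp only [inner_sum, inner_smul_right]
    _ ≤ (∑ i ∈ s, ‖c i‖ * ‖⟪u, e i⟫_𝕜‖) ^ 2 := by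
        gcongr
        exact norm_sum_le_of_le s fun i _ ↦ norm_mul_le _ _
    _ ≤ (∑ i ∈ s, ‖c i‖ ^ 2) * ∑ i ∈ s, ‖⟪u, e i⟫_𝕜‖ ^ 2 :=
        Finset.sum_mul_sq_le_sq_mul_sq s _ _

theorem norm_sum_smul_sq_of_orthonormal {e : I → H} (he : Orthonormal 𝕜 e) (s : Finset I)
    (c : I → 𝕜) : ‖∑ i ∈ s, c i • e i‖ ^ 2 = ∑ i ∈ s, ‖c i‖ ^ 2 := by
  rw [norm_sq_eq_re_inner (𝕜 := 𝕜), he.inner_sum, map_sum]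
  simp only [RCLike.conj_mul, ← RCLike.ofReal_pow, RCLike.ofReal_re]

theorem stmt_8_general {e : I → H} (he : Orthonormal 𝕜 e) (s : Finset I) (c : I → 𝕜) (u : H) :
    (∑ i ∈ s, ‖c i‖ ^ 2) * (1 - 2 * ∑ i ∈ s, ‖⟪u, e i⟫_𝕜‖ ^ 2)
      ≤ ‖∑ i ∈ s, c i • (e i - ⟪u, e i⟫_𝕜 • u)‖ ^ 2 := by
  set w := ∑ i ∈ s, c i • e i with hw
  calc (∑ i ∈ s, ‖c i‖ ^ 2) * (1 - 2 * ∑ i ∈ s, ‖⟪u, e i⟫_𝕜‖ ^ 2)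
      = ‖w‖ ^ 2 - 2 * ((∑ i ∈ s, ‖c i‖ ^ 2) * ∑ i ∈ s, ‖⟪u, e i⟫_𝕜‖ ^ 2) := by
        rw [hw, norm_sum_smul_sq_of_orthonormal he]
        ring
    _ ≤ ‖w‖ ^ 2 - 2 * ‖⟪u, w⟫_𝕜‖ ^ 2 := by
        gcongr
        exact norm_inner_sum_smul_sq_le s c e u
    _ ≤ ‖w - ⟪u, w⟫_𝕜 • u‖ ^ 2 := norm_sq_sub_two_mul_norm_inner_sq_le u w
    _ = ‖∑ i ∈ s, c i • (e i - ⟪u, e i⟫_𝕜 • u)‖ ^ 2 := by rw [sum_smul_sub_inner_smul]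

end

/-- Let `(e_i)` be a finite orthonormal family in a real inner product space `H`, `(c_i)`
real numbers, and `u ∈ H` with `|u| ≤ 1`.  Then `v = Σ c_i (e_i − ⟨u,e_i⟩u)` satisfies
`|v|² ≥ (Σ c_i²)(1 − 2 Σ ⟨u,e_i⟩²)`. -/
theorem stmt_8 {H : Type*} [NormedAddCommGroup H] [InnerProductSpace ℝ H]
    {I : Type*} [Fintype I] (e : I → H) (he : Orthonormal ℝ e)
    (c : I → ℝ) (u : H) (hu : ‖u‖ ≤ 1) :
    ‖∑ i, c i • (e i - ⟪u, e i⟫_ℝ • u)‖ ^ 2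
      ≥ (∑ i, c i ^ 2) * (1 - 2 * ∑ i, ⟪u, e i⟫_ℝ ^ 2) := by
  simpa only [Real.norm_eq_abs, sq_abs] using stmt_8_general he Finset.univ c u
end

section
/- Let a ≥ b > 0 > c be real numbers and let I = { x ∈ ℝ³ : |x| = 1 and a x₁² + b x₂² + c x₃² = 0 }. Then I is nonempty, every x ∈ I satisfies x₃ ≠ 0, and I has exactly two connected components, namely I⁺ = I ∩ {x₃ > 0} and I⁻ = I ∩ {x₃ < 0}, each of which is homeomorphic to a circle (via the projection (x₁,x₂,x₃) ↦ (x₁,x₂) onto the ellipse ((a−c)/(−c))x₁² + ((b−c)/(−c))x₂² = 1). -/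
/-!
On the unit sphere `|x'|² + t² = 1` of `ℝⁿ × ℝ`, eliminating `t` turns the cone equation
`∑ aᵢ x'ᵢ² + c t² = 0` into the equation `∑ wᵢ x'ᵢ² = 1`, `wᵢ = (aᵢ - c) / (-c)`, of an
ellipsoid for `x'` alone. As `aᵢ > 0 > c` gives `wᵢ > 1`, the ellipsoid lies inside the open unit
ball, so over each of its points the sphere has exactly two points `t = ±√(1 - |x'|²)`. The
intersection therefore consists of two graphs over the ellipsoid; these are connected, and `t`,
which never vanishes, separates them.
-/

open Metric Set WithLp

section Topology

variable {X Y α : Type*} [TopologicalSpace X] [TopologicalSpace Y]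

lemma isConnected_of_homeomorph {s : Set X} {t : Set Y} (e : s ≃ₜ t)
    (ht : IsConnected t) : IsConnected s := by
  rw [isConnected_iff_connectedSpace] at ht ⊢
  exact e.symm.surjective.connectedSpace e.symm.continuous

variable [LinearOrder α] [TopologicalSpace α] [OrderClosedTopology α]
  {S : Set X} {f : X → α} {c : α} {x : X}

lemma connectedComponentIn_eq_setOf_lt (hf : ContinuousOn f S) (hne : ∀ y ∈ S, f y ≠ c)
    (hconn : IsPreconnected {y ∈ S | c < f y}) (hx : x ∈ S) (hcx : c < f x) :
    connectedComponentIn S x = {y ∈ S | c < f y} := by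
  refine Subset.antisymm (fun y hy ↦ ?_)
    (hconn.subset_connectedComponentIn ⟨hx, hcx⟩ (sep_subset S _))
  have hcomp : connectedComponentIn S x ⊆ S := connectedComponentIn_subset S x
  refine ⟨hcomp hy, lt_of_not_ge fun hyc ↦ ?_⟩
  obtain ⟨z, hz, hzc⟩ := isPreconnected_connectedComponentIn.intermediate_value hy
    (mem_connectedComponentIn hx) (hf.mono hcomp) ⟨hyc, hcx.le⟩
  exact hne z (hcomp hz) hzc

lemma connectedComponentIn_eq_setOf_gt (hf : ContinuousOn f S) (hne : ∀ y ∈ S, f y ≠ c)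
    (hconn : IsPreconnected {y ∈ S | f y < c}) (hx : x ∈ S) (hxc : f x < c) :
    connectedComponentIn S x = {y ∈ S | f y < c} :=
  connectedComponentIn_eq_setOf_lt (α := αᵒᵈ) hf hne hconn hx hxc

end Topology

section Ellipsoid

variable {ι : Type*} [Fintype ι] {w : ι → ℝ}

/-- The ellipsoid `∑ wᵢ yᵢ² = 1` with centre `0` and semi-axes `1 / √wᵢ` (for positive `wᵢ`). -/
def ellipsoid (w : ι → ℝ) : Set (EuclideanSpace ℝ ι) :=
  {y | ∑ i, w i * y i ^ 2 = 1}

lemma ellipsoid_subset_ball (hw : ∀ i, 1 < w i) : ellipsoid w ⊆ ball 0 1 := by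
  intro y (hy : ∑ i, w i * y i ^ 2 = 1)
  obtain ⟨j, -, hj⟩ : ∃ j ∈ Finset.univ, w j * y j ^ 2 ≠ 0 :=
    Finset.exists_ne_zero_of_sum_ne_zero (hy ▸ one_ne_zero)
  have hyj : 0 < y j ^ 2 := pow_two_pos_of_ne_zero fun h ↦ hj (by simp [h])
  have hlt : ∑ i, y i ^ 2 < ∑ i, w i * y i ^ 2 :=
    Finset.sum_lt_sum (fun i _ ↦ le_mul_of_one_le_left (sq_nonneg _) (hw i).le)
      ⟨j, Finset.mem_univ j, lt_mul_of_one_lt_left hyj (hw j)⟩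
  rw [hy, ← EuclideanSpace.real_norm_sq_eq] at hlt
  exact mem_ball_zero_iff.2 ((sq_lt_one_iff₀ (norm_nonneg y)).1 hlt)

lemma nonempty_ellipsoid_homeomorph_sphere (hw : ∀ i, 0 < w i) :
    Nonempty (ellipsoid w ≃ₜ sphere (0 : EuclideanSpace ℝ ι) 1) := by
  let scale : EuclideanSpace ℝ ι ≃ₜ EuclideanSpace ℝ ι :=
    (PiLp.homeomorph 2 _).trans <| (Homeomorph.piCongrRight fun i ↦
      Homeomorph.mulLeft₀ (√(w i)) (Real.sqrt_pos.2 (hw i)).ne').trans (PiLp.homeomorph 2 _).symm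
  have scale_apply (y : EuclideanSpace ℝ ι) (i : ι) : scale y i = √(w i) * y i := rfl
  refine ⟨scale.subtype fun y ↦ ?_⟩
  have hnorm : ‖scale y‖ ^ 2 = ∑ i, w i * y i ^ 2 := by
    simp only [EuclideanSpace.real_norm_sq_eq, scale_apply, mul_pow, Real.sq_sqrt (hw _).le]
  rw [mem_sphere_zero_iff_norm, ← pow_eq_one_iff_of_nonneg (norm_nonneg _) two_ne_zero, hnorm]
  rfl

lemma isConnected_ellipsoid [Nontrivial ι] (hw : ∀ i, 0 < w i) : IsConnected (ellipsoid w) := by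
  obtain ⟨toSphere⟩ := nonempty_ellipsoid_homeomorph_sphere hw
  have hrank : 1 < Module.rank ℝ (EuclideanSpace ℝ ι) := by
    rw [← Module.finrank_eq_rank, finrank_euclideanSpace]
    exact_mod_cast Fintype.one_lt_card
  exact isConnected_of_homeomorph toSphere (isConnected_sphere hrank 0 zero_le_one)

end Ellipsoid

section SphereOver

variable {n : ℕ} {s : Set (EuclideanSpace ℝ (Fin n))} {x : EuclideanSpace ℝ (Fin (n + 1))}

/-- The orthogonal projection `ℝⁿ⁺¹ → ℝⁿ` along the last coordinate axis. -/
def dropLast (x : EuclideanSpace ℝ (Fin (n + 1))) : EuclideanSpace ℝ (Fin n) :=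
  toLp 2 fun i ↦ x i.castSucc

lemma continuous_dropLast : Continuous (dropLast (n := n)) := by
  unfold dropLast
  fun_prop

lemma norm_sq_eq_norm_dropLast_sq_add (x : EuclideanSpace ℝ (Fin (n + 1))) :
    ‖x‖ ^ 2 = ‖dropLast x‖ ^ 2 + x (Fin.last n) ^ 2 := by
  simp only [EuclideanSpace.real_norm_sq_eq, Fin.sum_univ_castSucc, dropLast]

lemma last_sq_of_norm_eq_one (hx : ‖x‖ = 1) :
    x (Fin.last n) ^ 2 = 1 - ‖dropLast x‖ ^ 2 := by
  have h := norm_sq_eq_norm_dropLast_sq_add x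
  rw [hx] at h
  linarith

lemma one_sub_norm_sq_pos_of_mem_ball {E : Type*} [SeminormedAddCommGroup E] {y : E}
    (hy : y ∈ ball 0 1) : 0 < 1 - ‖y‖ ^ 2 :=
  sub_pos.2 (pow_lt_one₀ (norm_nonneg y) (mem_ball_zero_iff.1 hy) two_ne_zero)

/-- The part of the unit sphere of `ℝⁿ⁺¹` lying over `s ⊆ ℝⁿ`. -/
def sphereOver (s : Set (EuclideanSpace ℝ (Fin n))) : Set (EuclideanSpace ℝ (Fin (n + 1))) :=
  {x | ‖x‖ = 1 ∧ dropLast x ∈ s}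

lemma last_ne_zero_of_mem_sphereOver (hs : s ⊆ ball 0 1) (hx : x ∈ sphereOver s) :
    x (Fin.last n) ≠ 0 := by
  rw [← sq_pos_iff, last_sq_of_norm_eq_one hx.1]
  exact one_sub_norm_sq_pos_of_mem_ball (hs hx.2)

/-- The point of the upper unit hemisphere of `ℝⁿ⁺¹` over a point `y` of the unit ball of `ℝⁿ`;
outside the ball the square root, and hence the last coordinate, is `0`. -/
noncomputable def liftToHemisphere (y : EuclideanSpace ℝ (Fin n)) :
    EuclideanSpace ℝ (Fin (n + 1)) :=
  toLp 2 (Fin.snoc (fun i ↦ y i) √(1 - ‖y‖ ^ 2))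

lemma continuous_liftToHemisphere : Continuous (liftToHemisphere (n := n)) :=
  (PiLp.continuous_toLp 2 _).comp (Continuous.finSnoc (by fun_prop) (by fun_prop))

lemma dropLast_liftToHemisphere (y : EuclideanSpace ℝ (Fin n)) :
    dropLast (liftToHemisphere y) = y := by
  ext i
  simp [dropLast, liftToHemisphere]

lemma liftToHemisphere_last (y : EuclideanSpace ℝ (Fin n)) :
    liftToHemisphere y (Fin.last n) = √(1 - ‖y‖ ^ 2) := by
  simp [liftToHemisphere]

lemma liftToHemisphere_dropLast (hx : ‖x‖ = 1) (hnonneg : 0 ≤ x (Fin.last n)) :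
    liftToHemisphere (dropLast x) = x := by
  ext i
  cases i using Fin.lastCases with
  | last => rw [liftToHemisphere_last, ← last_sq_of_norm_eq_one hx, Real.sqrt_sq hnonneg]
  | cast i => simp [liftToHemisphere, dropLast]

lemma liftToHemisphere_mem (hs : s ⊆ ball 0 1) {y : EuclideanSpace ℝ (Fin n)} (hy : y ∈ s) :
    liftToHemisphere y ∈ {x ∈ sphereOver s | 0 < x (Fin.last n)} := by
  have hpos := one_sub_norm_sq_pos_of_mem_ball (hs hy)
  refine ⟨⟨?_, by rwa [dropLast_liftToHemisphere]⟩, ?_⟩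
  · rw [← pow_eq_one_iff_of_nonneg (norm_nonneg _) two_ne_zero,
      norm_sq_eq_norm_dropLast_sq_add, dropLast_liftToHemisphere, liftToHemisphere_last,
      Real.sq_sqrt hpos.le, add_sub_cancel]
  · rw [liftToHemisphere_last]
    exact Real.sqrt_pos.2 hpos

/-- Projection along the last axis, as a homeomorphism from the part of the open upper hemisphere
over `s` onto `s`. -/
noncomputable def upperSphereOverHomeomorph (hs : s ⊆ ball 0 1) :
    {x ∈ sphereOver s | 0 < x (Fin.last n)} ≃ₜ s where
  toFun x := ⟨dropLast x.1, x.2.1.2⟩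
  invFun y := ⟨liftToHemisphere y.1, liftToHemisphere_mem hs y.2⟩
  left_inv x := Subtype.ext (liftToHemisphere_dropLast x.2.1.1 x.2.2.le)
  right_inv y := Subtype.ext (dropLast_liftToHemisphere y.1)
  continuous_toFun := by have := continuous_dropLast (n := n); fun_prop
  continuous_invFun := by have := continuous_liftToHemisphere (n := n); fun_prop

/-- Projection along the last axis, as a homeomorphism from the part of the open lower hemisphere
over `s` onto `s`; it is the projection of the upper hemisphere conjugated by the antipodal maps. -/
noncomputable def lowerSphereOverHomeomorph (hs : s ⊆ ball 0 1) :
    {x ∈ sphereOver s | x (Fin.last n) < 0} ≃ₜ s :=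
  have antipodal_mem (x : EuclideanSpace ℝ (Fin (n + 1))) :
      x ∈ sphereOver s ∧ x (Fin.last n) < 0 ↔
        -x ∈ sphereOver (-s) ∧ 0 < (-x) (Fin.last n) := by
    have hdrop : dropLast (-x) = -dropLast x := rfl
    simp only [sphereOver, mem_ofPred_eq, norm_neg, hdrop, Set.neg_mem_neg, PiLp.neg_apply, neg_pos]
  have neg_subset_ball : -s ⊆ ball 0 1 := fun y hy ↦ by simpa using hs hy
  ((Homeomorph.neg _).subtype antipodal_mem).trans <|
    (upperSphereOverHomeomorph neg_subset_ball).trans <|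
      (Homeomorph.neg _).subtype fun _ ↦ Iff.rfl

lemma sphereOver_eq_upper_union_lower (hs : s ⊆ ball 0 1) :
    sphereOver s =
      {x ∈ sphereOver s | 0 < x (Fin.last n)} ∪ {x ∈ sphereOver s | x (Fin.last n) < 0} := by
  rw [← sep_or, eq_comm, sep_eq_self_iff_mem_true]
  exact fun x hx ↦ (last_ne_zero_of_mem_sphereOver hs hx).gt_or_lt

lemma connectedComponentIn_sphereOver_eq_upper_or_lower (hs : s ⊆ ball 0 1)
    (hpre : IsPreconnected s) (hx : x ∈ sphereOver s) :
    connectedComponentIn (sphereOver s) x = {y ∈ sphereOver s | 0 < y (Fin.last n)} ∨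
      connectedComponentIn (sphereOver s) x = {y ∈ sphereOver s | y (Fin.last n) < 0} := by
  have hcont : Continuous fun y : EuclideanSpace ℝ (Fin (n + 1)) ↦ y (Fin.last n) := by fun_prop
  have hne (y) (hy : y ∈ sphereOver s) := last_ne_zero_of_mem_sphereOver hs hy
  have hconn : IsConnected s := ⟨⟨dropLast x, hx.2⟩, hpre⟩
  have hupper := isConnected_of_homeomorph (upperSphereOverHomeomorph hs) hconn
  have hlower := isConnected_of_homeomorph (lowerSphereOverHomeomorph hs) hconn
  exact (hne x hx).gt_or_lt.imp
    (connectedComponentIn_eq_setOf_lt hcont.continuousOn hne hupper.isPreconnected hx)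
    (connectedComponentIn_eq_setOf_gt hcont.continuousOn hne hlower.isPreconnected hx)

lemma sphere_inter_cone_eq_sphereOver_ellipsoid (a : Fin n → ℝ) {c : ℝ} (hc : c ≠ 0) :
    {x : EuclideanSpace ℝ (Fin (n + 1)) |
      ‖x‖ = 1 ∧ ∑ i : Fin n, a i * x i.castSucc ^ 2 + c * x (Fin.last n) ^ 2 = 0} =
    sphereOver (ellipsoid fun i ↦ (a i - c) / (-c)) := by
  ext x
  refine and_congr_right fun hx ↦ ?_
  have hlast : x (Fin.last n) ^ 2 = 1 - ∑ i : Fin n, x i.castSucc ^ 2 := by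
    rw [last_sq_of_norm_eq_one hx, EuclideanSpace.real_norm_sq_eq]
    rfl
  have hsum : ∑ i : Fin n, (a i - c) / (-c) * x i.castSucc ^ 2 =
      (∑ i : Fin n, a i * x i.castSucc ^ 2 - c * ∑ i : Fin n, x i.castSucc ^ 2) / (-c) := by
    rw [Finset.mul_sum, ← Finset.sum_sub_distrib, Finset.sum_div]
    exact Finset.sum_congr rfl fun i _ ↦ by ring
  change _ ↔ ∑ i : Fin n, (a i - c) / (-c) * x i.castSucc ^ 2 = 1
  rw [hsum, hlast, div_eq_one_iff_eq (neg_ne_zero.2 hc)]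
  constructor <;> intro h <;> linarith

end SphereOver

theorem stmt_13_general {n : ℕ} (hn : 2 ≤ n) (a : Fin n → ℝ) (c : ℝ) (ha : ∀ i, 0 < a i)
    (hc : c < 0) (I Iplus Iminus : Set (EuclideanSpace ℝ (Fin (n + 1))))
    (hI : I = {x | ‖x‖ = 1 ∧
      ∑ i : Fin n, a i * x i.castSucc ^ 2 + c * x (Fin.last n) ^ 2 = 0})
    (hIplus : Iplus = {x ∈ I | 0 < x (Fin.last n)})
    (hIminus : Iminus = {x ∈ I | x (Fin.last n) < 0}) :
    I.Nonempty ∧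
    (∀ x ∈ I, x (Fin.last n) ≠ 0) ∧
    (∀ x ∈ I, ∑ i : Fin n, (a i - c) / (-c) * x i.castSucc ^ 2 = 1) ∧
    I = Iplus ∪ Iminus ∧
    Disjoint Iplus Iminus ∧
    IsConnected Iplus ∧
    IsConnected Iminus ∧
    (∀ x ∈ I, connectedComponentIn I x = Iplus ∨ connectedComponentIn I x = Iminus) ∧
    Nonempty (Iplus ≃ₜ sphere (0 : EuclideanSpace ℝ (Fin n)) 1) ∧
    Nonempty (Iminus ≃ₜ sphere (0 : EuclideanSpace ℝ (Fin n)) 1) := by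
  have hw (i) : 1 < (a i - c) / (-c) := by
    rw [one_lt_div (neg_pos.2 hc)]
    linarith [ha i]
  have hw_pos (i) := one_pos.trans (hw i)
  have hball := ellipsoid_subset_ball hw
  have : Nontrivial (Fin n) := Fin.nontrivial_iff_two_le.2 hn
  have hconn := isConnected_ellipsoid hw_pos
  obtain ⟨toSphere⟩ := nonempty_ellipsoid_homeomorph_sphere hw_pos
  rw [sphere_inter_cone_eq_sphereOver_ellipsoid a hc.ne] at hI
  subst hI hIplus hIminus
  have hplus := isConnected_of_homeomorph (upperSphereOverHomeomorph hball) hconn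
  have hminus := isConnected_of_homeomorph (lowerSphereOverHomeomorph hball) hconn
  exact ⟨hplus.nonempty.mono (sep_subset _ _),
    fun x ↦ last_ne_zero_of_mem_sphereOver hball,
    fun x hx ↦ hx.2,
    sphereOver_eq_upper_union_lower hball,
    disjoint_left.2 fun x hx hx' ↦ lt_asymm hx.2 hx'.2,
    hplus, hminus,
    fun x ↦ connectedComponentIn_sphereOver_eq_upper_or_lower hball hconn.isPreconnected,
    ⟨(upperSphereOverHomeomorph hball).trans toSphere⟩,
    ⟨(lowerSphereOverHomeomorph hball).trans toSphere⟩⟩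

/-- Let `a ≥ b > 0 > c` and `I = {x ∈ ℝ³ : |x| = 1, a x₁² + b x₂² + c x₃² = 0}`.  Then `I`
is nonempty, every `x ∈ I` has `x₃ ≠ 0`, `I` lies on the cylinder over the ellipse
`((a−c)/(−c)) x₁² + ((b−c)/(−c)) x₂² = 1`, and `I` has exactly two connected components
`I⁺ = I ∩ {x₃ > 0}` and `I⁻ = I ∩ {x₃ < 0}`, each homeomorphic to a circle. -/
theorem stmt_13 (a b c : ℝ) (hab : b ≤ a) (hb : 0 < b) (hc : c < 0)
    (I Iplus Iminus : Set (EuclideanSpace ℝ (Fin 3)))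
    (hI : I = {x | ‖x‖ = 1 ∧ a * x 0 ^ 2 + b * x 1 ^ 2 + c * x 2 ^ 2 = 0})
    (hIplus : Iplus = {x ∈ I | 0 < x 2})
    (hIminus : Iminus = {x ∈ I | x 2 < 0}) :
    I.Nonempty ∧
    (∀ x ∈ I, x 2 ≠ 0) ∧
    (∀ x ∈ I, (a - c) / (-c) * x 0 ^ 2 + (b - c) / (-c) * x 1 ^ 2 = 1) ∧
    I = Iplus ∪ Iminus ∧
    Disjoint Iplus Iminus ∧
    IsConnected Iplus ∧
    IsConnected Iminus ∧
    (∀ x ∈ I, connectedComponentIn I x = Iplus ∨ connectedComponentIn I x = Iminus) ∧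
    Nonempty (Iplus ≃ₜ Metric.sphere (0 : EuclideanSpace ℝ (Fin 2)) 1) ∧
    Nonempty (Iminus ≃ₜ Metric.sphere (0 : EuclideanSpace ℝ (Fin 2)) 1) := by
  simpa [Fin.sum_univ_two] using stmt_13_general le_rfl ![a, b] c
    (Fin.forall_fin_two.2 ⟨hb.trans_le hab, hb⟩) hc I _ _ (by simpa using hI) hIplus hIminus
end
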